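/- Let A₁ and A₂ be complex Banach algebras and let φ : A₁ → A₂ be a continuous algebra homomorphism with dense range such that every element of A₁* is of the form F∘φ for some F ∈ A₂*. If A₁ is cyclically amenable, then A₂ is cyclically amenable. -/

import Mathlib

/-- `D : A → A*` (a continuous linear map into the dual) is a *derivation* when
`D(ab) = D(a)·b + a·D(b)`, where `A*` is an `A`-bimodule via `(F·a)(x) = F(ax)` and
`(a·F)(x) = F(xa)`; pairing against `x : A` gives the condition below. -/
def IsDerivation {A : Type*} [NonUnitalNormedRing A] [NormedSpace ℂ A]
    (D : A →L[ℂ] (A →L[ℂ] ℂ)) : Prop :=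
  ∀ a b x : A, D (a * b) x = D a (b * x) + D b (x * a)

/-- A map `D : A → A*` is *cyclic* when `⟨D(a), b⟩ + ⟨D(b), a⟩ = 0` for all `a, b`. -/
def IsCyclicMap {A : Type*} [NonUnitalNormedRing A] [NormedSpace ℂ A]
    (D : A →L[ℂ] (A →L[ℂ] ℂ)) : Prop :=
  ∀ a b : A, D a b + D b a = 0

/-- `D : A → A*` is *inner* if `D = ad_F` for some `F ∈ A*`, where
`ad_F(a) = F·a - a·F`, i.e. `⟨ad_F(a), x⟩ = F(ax) - F(xa)`. -/
def IsInnerDerivation {A : Type*} [NonUnitalNormedRing A] [NormedSpace ℂ A]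
    (D : A →L[ℂ] (A →L[ℂ] ℂ)) : Prop :=
  ∃ F : A →L[ℂ] ℂ, ∀ a x : A, D a x = F (a * x) - F (x * a)

/-- A Banach algebra `A` is *cyclically weakly amenable* if every continuous derivation
from `A` into `A*` is cyclic. -/
def CyclicallyWeaklyAmenable (A : Type*) [NonUnitalNormedRing A] [NormedSpace ℂ A] : Prop :=
  ∀ D : A →L[ℂ] (A →L[ℂ] ℂ), IsDerivation D → IsCyclicMap D

/-- A Banach algebra `A` is *weakly amenable* if every continuous derivation
from `A` into `A*` is inner. -/
def WeaklyAmenable (A : Type*) [NonUnitalNormedRing A] [NormedSpace ℂ A] : Prop :=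
  ∀ D : A →L[ℂ] (A →L[ℂ] ℂ), IsDerivation D → IsInnerDerivation D

/-- A Banach algebra `A` is *cyclically amenable* if every continuous cyclic derivation
from `A` into `A*` is inner. -/
def CyclicallyAmenable (A : Type*) [NonUnitalNormedRing A] [NormedSpace ℂ A] : Prop :=
  ∀ D : A →L[ℂ] (A →L[ℂ] ℂ), IsDerivation D → IsCyclicMap D → IsInnerDerivation D

section Pullback

variable {A B : Type*} [NonUnitalNormedRing A] [NormedSpace ℂ A]
  [NonUnitalNormedRing B] [NormedSpace ℂ B] {φ : A →L[ℂ] B} {D : B →L[ℂ] (B →L[ℂ] ℂ)}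

-- `D.bilinearComp φ φ` is the map `φ* ∘ D ∘ φ : A → A*`.
theorem IsDerivation.bilinearComp (hD : IsDerivation D) (hφmul : ∀ a b : A, φ (a * b) = φ a * φ b) :
    IsDerivation (D.bilinearComp φ φ) := fun a b x => by
  simpa only [ContinuousLinearMap.bilinearComp_apply, hφmul] using hD (φ a) (φ b) (φ x)

theorem IsCyclicMap.bilinearComp (hD : IsCyclicMap D) : IsCyclicMap (D.bilinearComp φ φ) :=
  fun a b => hD (φ a) (φ b)

theorem IsInnerDerivation.of_denseRange {ι : Type*} {u : ι → B} (hu : DenseRange u)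
    {F : B →L[ℂ] ℂ} (hF : ∀ i j, D (u i) (u j) = F (u i * u j) - F (u j * u i)) :
    IsInnerDerivation D :=
  ⟨F, fun a x => hu.induction_on₂ (p := fun a x => D a x = F (a * x) - F (x * a))
    (isClosed_eq (by fun_prop) (by fun_prop)) hF a x⟩

-- `ad_f` sees `f` only through its values on commutators.
theorem IsInnerDerivation.of_bilinearComp (hφmul : ∀ a b : A, φ (a * b) = φ a * φ b)
    (hφdense : DenseRange φ)
    (hφcomm : ∀ f : A →L[ℂ] ℂ, ∃ F : B →L[ℂ] ℂ,
      ∀ a b : A, f (a * b - b * a) = F (φ (a * b - b * a)))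
    (hD : IsInnerDerivation (D.bilinearComp φ φ)) : IsInnerDerivation D := by
  obtain ⟨f, hf⟩ := hD
  obtain ⟨F, hF⟩ := hφcomm f
  refine .of_denseRange hφdense (F := F) fun a b => ?_
  calc
    D (φ a) (φ b) = f (a * b) - f (b * a) := hf a b
    _ = f (a * b - b * a) := (map_sub f _ _).symm
    _ = F (φ (a * b - b * a)) := hF a b
    _ = F (φ a * φ b) - F (φ b * φ a) := by simp only [map_sub, hφmul]

end Pullback

theorem cyclicallyAmenable_of_denseRange_hom_general {A₁ A₂ : Type*}
    [NonUnitalNormedRing A₁] [NormedSpace ℂ A₁] [NonUnitalNormedRing A₂] [NormedSpace ℂ A₂]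
    (φ : A₁ →L[ℂ] A₂) (hφmul : ∀ a b : A₁, φ (a * b) = φ a * φ b)
    (hφdense : DenseRange φ)
    (hφcomm : ∀ f : A₁ →L[ℂ] ℂ, ∃ F : A₂ →L[ℂ] ℂ,
      ∀ a b : A₁, f (a * b - b * a) = F (φ (a * b - b * a)))
    (h : CyclicallyAmenable A₁) :
    CyclicallyAmenable A₂ := fun D hder hcyc =>
  have hinner : IsInnerDerivation (D.bilinearComp φ φ) :=
    h _ (hder.bilinearComp hφmul) hcyc.bilinearComp
  hinner.of_bilinearComp hφmul hφdense hφcomm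

/-- If `φ : A₁ → A₂` is a continuous algebra homomorphism with dense range between complex
Banach algebras such that every functional in `A₁*` has the form `F ∘ φ` with `F ∈ A₂*`,
and `A₁` is cyclically amenable, then so is `A₂`. -/
theorem cyclicallyAmenable_of_denseRange_hom {A₁ A₂ : Type*}
    [NonUnitalNormedRing A₁] [NormedSpace ℂ A₁] [IsScalarTower ℂ A₁ A₁]
    [SMulCommClass ℂ A₁ A₁] [CompleteSpace A₁]
    [NonUnitalNormedRing A₂] [NormedSpace ℂ A₂] [IsScalarTower ℂ A₂ A₂]
    [SMulCommClass ℂ A₂ A₂] [CompleteSpace A₂]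
    (φ : A₁ →L[ℂ] A₂) (hφmul : ∀ a b : A₁, φ (a * b) = φ a * φ b)
    (hφdense : DenseRange φ)
    (hφdual : ∀ f : A₁ →L[ℂ] ℂ, ∃ F : A₂ →L[ℂ] ℂ, ∀ a : A₁, f a = F (φ a))
    (h : CyclicallyAmenable A₁) :
    CyclicallyAmenable A₂ :=
  cyclicallyAmenable_of_denseRange_hom_general φ hφmul hφdense
    (fun f => (hφdual f).imp fun _ hF _ _ => hF _) h
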